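/- Let ε₀ > 0 and ε₁ ∈ (0,1) be constants with ε₁ ≥ 5ε₀. For all sufficiently large n, in the setup: if Σ_{i=1}^n β_i > 5ε₁·log₂ k / log₂ n, then Σ_{good i} q_i² ≥ ( (1/5)·ε₁·ρ )² / ( n·(log₂|A|)² ). -/

import Mathlib

/-!
The proof is an entropy-budget argument. Write `ρ = rho n`, `k = C(n, ρ)`, `L = log₂ |A|` and
`R = log₂ k / log₂ n`.

* The chain rule (`sum_alpha_add_beta`) gives `∑ (α_i + β_i) = log₂ |S|`, and `|S| ≈ k'` is so close
  to `k` that `log₂ |S|` falls short of `log₂ k` by at most `O(ε₀ R)` (`asymptotics`).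
* Since `∑ q_i = ρ`, concavity gives `∑ H(q_i) ≤ n H(ρ/n)`, which is at most
  `log₂ k + log₂ (n + 1)` because the term of index `ρ` is the largest in the binomial expansion of
  `(ρ + (n - ρ))^n` (`binomial_term_le`, `mul_binEnt_le`). Hence the nonnegative defects
  `H(q_i) - α_i` sum to at most `∑ β_i + 1.5 ε₁ R`.
* We have `β_i ≤ q_i L` (`betaE_le`). An index with `α_i < H(q_i) - 2 q_i L` therefore satisfies
  `β_i ≤ (H(q_i) - α_i) / 2`, and an index with `β_i < ε₁ q_i / 2` is charged to `∑ q_i = ρ`. So the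
  good indices keep `∑ β_i ≥ (∑_all β_i) / 2 - 0.75 ε₁ R - ε₁ ρ / 2`.
* As `R ≥ 0.4 ρ` (`logb_choose_ge`) and `∑_all β_i > 5 ε₁ R`, this is at least `ε₁ ρ / 5`. Then
  `∑_good q_i ≥ ε₁ ρ / (5 L)`, and Cauchy–Schwarz finishes the proof.

Entropies are handled through `fEnt_eq_avg` and `cEnt_eq_avg`, which write them as averages over the
vertices of logarithms of fibre sizes; the chain rule becomes a telescoping sum.
-/

open Classical Finset

noncomputable section

/-- Binary entropy function (base 2). -/
def binEnt (p : ℝ) : ℝ := -(p * Real.logb 2 p) - (1 - p) * Real.logb 2 (1 - p)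

/-- Entropy (base 2) of the random variable `f` under the uniform distribution on `S`. -/
def fEnt {V B : Type*} [Fintype B] (S : Finset V) (f : V → B) : ℝ :=
  ∑ b : B,
    -((((S.filter fun v => f v = b).card : ℝ) / (S.card : ℝ)) *
      Real.logb 2 (((S.filter fun v => f v = b).card : ℝ) / (S.card : ℝ)))

/-- Conditional entropy `H(f | g)` under the uniform distribution on `S`. -/
def cEnt {V B C : Type*} [Fintype B] [Fintype C] (S : Finset V) (f : V → B) (g : V → C) : ℝ :=
  ∑ c : C, (((S.filter fun v => g v = c).card : ℝ) / (S.card : ℝ)) *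
      fEnt (S.filter fun v => g v = c) f

/-- Probability of the event `P` under the uniform distribution on `S`. -/
def prS {V : Type*} (S : Finset V) (P : V → Prop) : ℝ :=
  ((S.filter P).card : ℝ) / (S.card : ℝ)

/-- A 2CSP instance on `n` variables over alphabet `A`: an undirected constraint graph
together with a relation on each constraint edge. -/
structure CSP (n : ℕ) (A : Type*) where
  adj : Fin n → Fin n → Prop
  symm : ∀ {i j}, adj i j → adj j i
  irrefl : ∀ i, ¬ adj i i
  rel : Fin n → Fin n → A → A → Prop
  rel_symm : ∀ i j a b, rel i j a b ↔ rel j i b a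

/-- ρ = ⌈√n · log log n⌉. -/
def rho (n : ℕ) : ℕ := ⌈Real.sqrt n * Real.logb 2 (Real.logb 2 n)⌉₊

/-- k = C(n, ρ). -/
def kk (n : ℕ) : ℕ := n.choose (rho n)

/-- N = C(n,ρ)·|A|^ρ, the number of vertices of the product graph. -/
def NN (n a : ℕ) : ℕ := n.choose (rho n) * a ^ (rho n)

/-- k' = k · N^(−ε₀ / log log N). -/
def kprime (n a : ℕ) (ε₀ : ℝ) : ℝ :=
  (kk n : ℝ) * (NN n a : ℝ) ^ (-(ε₀ / Real.logb 2 (Real.logb 2 (NN n a))))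

/-- Vertices of the product graph: pairs (T, y) with T ⊆ {1,…,n}, |T| = ρ, y : T → A. -/
abbrev Vtx (n ρ : ℕ) (A : Type*) := Σ T : {T : Finset (Fin n) // T.card = ρ}, (↥T.1 → A)

variable {n ρ : ℕ} {A : Type*} [Fintype A] [DecidableEq A]

/-- X_i : indicator of the event that variable i is chosen by vertex v. -/
def Xb (v : Vtx n ρ A) (i : Fin n) : Bool := decide (i ∈ v.1.1)

/-- Y_i : value of vertex v on variable i (default a₀ if i is not chosen). -/
def Yv (a₀ : A) (v : Vtx n ρ A) (i : Fin n) : A :=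
  if h : i ∈ v.1.1 then v.2 ⟨i, h⟩ else a₀

/-- Type of prefix values: (X₁,…,X_{i},Y₁,…,Y_{i}) padded with defaults. -/
abbrev Pfx (n : ℕ) (A : Type*) := (Fin n → Bool) × (Fin n → A)

/-- W_{i-1} : the prefix of v consisting of (X_j, Y_j) for j < i (0-indexed cutoff i). -/
def Wp (a₀ : A) (i : ℕ) (v : Vtx n ρ A) : Pfx n A :=
  (fun j => if (j : ℕ) < i then Xb v j else false,
   fun j => if (j : ℕ) < i then Yv a₀ v j else a₀)

/-- q_i = Pr[X_i = 1]. -/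
def qi (S : Finset (Vtx n ρ A)) (i : Fin n) : ℝ := prS S (fun v => Xb v i = true)

/-- Pr[w_{i-1}] : probability of the prefix value w. -/
def prW (a₀ : A) (S : Finset (Vtx n ρ A)) (i : ℕ) (w : Pfx n A) : ℝ :=
  prS S (fun v => Wp a₀ i v = w)

/-- q_i(w_{i-1}) = Pr[X_i = 1 | W_{i-1} = w]. -/
def qiW (a₀ : A) (S : Finset (Vtx n ρ A)) (i : Fin n) (w : Pfx n A) : ℝ :=
  prS (S.filter fun v => Wp a₀ (i : ℕ) v = w) (fun v => Xb v i = true)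

/-- α_i = H(X_i | W_{i-1}). -/
def alphaE (a₀ : A) (S : Finset (Vtx n ρ A)) (i : Fin n) : ℝ :=
  cEnt S (fun v => Xb v i) (Wp a₀ (i : ℕ))

/-- β_i = H(Y_i | W_{i-1}, X_i). -/
def betaE (a₀ : A) (S : Finset (Vtx n ρ A)) (i : Fin n) : ℝ :=
  cEnt S (fun v => Yv a₀ v i) (fun v => (Wp a₀ (i : ℕ) v, Xb v i))

/-- β_i(w_{i-1}) = H(Y_i | X_i, W_{i-1} = w). -/
def betaW (a₀ : A) (S : Finset (Vtx n ρ A)) (i : Fin n) (w : Pfx n A) : ℝ :=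
  cEnt (S.filter fun v => Wp a₀ (i : ℕ) v = w) (fun v => Yv a₀ v i) (fun v => Xb v i)

/-- A good index: α_i ≥ H(q_i) − 2q_i·log|A| and β_i ≥ (1/2)ε₁q_i. -/
def GoodIdx (a₀ : A) (S : Finset (Vtx n ρ A)) (ε₁ : ℝ) (i : Fin n) : Prop :=
  alphaE a₀ S i ≥ binEnt (qi S i) - 2 * qi S i * Real.logb 2 (Fintype.card A) ∧
  betaE a₀ S i ≥ (1 / 2) * ε₁ * qi S i

/-- Neighborhood relation of the i-th prefix graph (self-loops included): two prefixes are
neighbors iff wherever both choose a variable j < i they assign it the same label. -/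
def PfxNbr (n : ℕ) (A : Type*) (i : ℕ) (w σ' : Pfx n A) : Prop :=
  ∀ j : Fin n, (j : ℕ) < i → w.1 j = true → σ'.1 j = true → w.2 j = σ'.2 j

/-- A good prefix. -/
def GoodPfx (a₀ : A) (S : Finset (Vtx n ρ A)) (ε₁ ε₂ ε₃ : ℝ) (i : Fin n) (w : Pfx n A) : Prop :=
  GoodIdx a₀ S ε₁ i ∧
  (∑ σ' : Pfx n A, if PfxNbr n A (i : ℕ) w σ' then prW a₀ S (i : ℕ) σ' * qiW a₀ S i σ' else 0)
      ≥ (1 - ε₂) * qi S i ∧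
  betaW a₀ S i w ≥ ε₃ * qiW a₀ S i w

/-- A vertex violating an internal 2CSP constraint (an isolated vertex). -/
def Violates (ψ : CSP n A) (v : Vtx n ρ A) : Prop :=
  ∃ i j, ∃ (hi : i ∈ v.1.1) (hj : j ∈ v.1.1),
    ψ.adj i j ∧ ¬ ψ.rel i j (v.2 ⟨i, hi⟩) (v.2 ⟨j, hj⟩)

/-- Adjacency in the product graph G_ψ: both endpoints are non-isolated, they agree on
common variables, and all cross 2CSP constraints are satisfied. -/
def PAdj (ψ : CSP n A) (u v : Vtx n ρ A) : Prop :=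
  ¬ Violates ψ u ∧ ¬ Violates ψ v ∧
  (∀ i, ∀ (hu : i ∈ u.1.1) (hv : i ∈ v.1.1), u.2 ⟨i, hu⟩ = v.2 ⟨i, hv⟩) ∧
  (∀ i j, ∀ (hu : i ∈ u.1.1) (hv : j ∈ v.1.1), ψ.adj i j → ψ.rel i j (u.2 ⟨i, hu⟩) (v.2 ⟨j, hv⟩))

/-- den(S) : the edge density of S in the product graph. -/
def den (ψ : CSP n A) (S : Finset (Vtx n ρ A)) : ℝ :=
  (((S ×ˢ S).filter fun p => PAdj ψ p.1 p.2).card : ℝ) / ((S.card : ℝ) ^ 2)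

/-- den(G_{i+1}) : weighted density of the prefix graph with cutoff i. -/
def pfxDen (a₀ : A) (S : Finset (Vtx n ρ A)) (i : ℕ) : ℝ :=
  ∑ w : Pfx n A, ∑ σ' : Pfx n A,
    if PfxNbr n A i w σ' then prW a₀ S i w * prW a₀ S i σ' else 0

/-- Number of (ordered) satisfied constraint pairs for assignment τ. -/
def nSat (ψ : CSP n A) (τ : Fin n → A) : ℕ :=
  ((univ ×ˢ univ : Finset (Fin n × Fin n)).filter fun p =>
    ψ.adj p.1 p.2 ∧ ψ.rel p.1 p.2 (τ p.1) (τ p.2)).card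

/-- Number of (ordered) constraint pairs. -/
def nEdg (ψ : CSP n A) : ℕ :=
  ((univ ×ˢ univ : Finset (Fin n × Fin n)).filter fun p => ψ.adj p.1 p.2).card

/-- The constraint graph is d-regular. -/
def Regular (ψ : CSP n A) (d : ℕ) : Prop :=
  ∀ i, ((univ : Finset (Fin n)).filter fun j => ψ.adj i j).card = d

/-- A typical prefix: (1−ε₅)ρ/n < q_i(w) < (1+ε₅)ρ/n. -/
def TypPfx (a₀ : A) (S : Finset (Vtx n ρ A)) (ε₅ : ℝ) (i : Fin n) (w : Pfx n A) : Prop :=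
  (1 - ε₅) * ((ρ : ℝ) / (n : ℝ)) < qiW a₀ S i w ∧ qiW a₀ S i w < (1 + ε₅) * ((ρ : ℝ) / (n : ℝ))

/-- A typical variable: typical prefixes have total probability at least 1−ε₅. -/
def TypVar (a₀ : A) (S : Finset (Vtx n ρ A)) (ε₅ : ℝ) (i : Fin n) : Prop :=
  (∑ w : Pfx n A, if TypPfx a₀ S ε₅ i w then prW a₀ S (i : ℕ) w else 0) ≥ 1 - ε₅

/-- I(u,v) : the number of tests between u and v (ordered pairs (i,j) forming a constraint
edge between typical variables, chosen with typical prefixes by u, v respectively). -/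
def Icnt (ψ : CSP n A) (a₀ : A) (S : Finset (Vtx n ρ A)) (ε₅ : ℝ) (u v : Vtx n ρ A) : ℕ :=
  ((univ ×ˢ univ : Finset (Fin n × Fin n)).filter fun p =>
    ψ.adj p.1 p.2 ∧ TypVar a₀ S ε₅ p.1 ∧ TypVar a₀ S ε₅ p.2 ∧
    Xb u p.1 = true ∧ Xb v p.2 = true ∧
    TypPfx a₀ S ε₅ p.1 (Wp a₀ (p.1 : ℕ) u) ∧ TypPfx a₀ S ε₅ p.2 (Wp a₀ (p.2 : ℕ) v)).card

/-- I^T(i,j) : the number of tests of the constraint (i,j) over pairs of S. -/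
def ITop (a₀ : A) (S : Finset (Vtx n ρ A)) (ε₅ : ℝ) (i j : Fin n) : ℕ :=
  ((S ×ˢ S).filter fun p =>
    Xb p.1 i = true ∧ Xb p.2 j = true ∧
    TypPfx a₀ S ε₅ i (Wp a₀ (i : ℕ) p.1) ∧ TypPfx a₀ S ε₅ j (Wp a₀ (j : ℕ) p.2)).card

/-- E_{u,v}[I(u,v)] for u,v independent uniform on S. -/
def EI (ψ : CSP n A) (a₀ : A) (S : Finset (Vtx n ρ A)) (ε₅ : ℝ) : ℝ :=
  (∑ u ∈ S, ∑ v ∈ S, (Icnt ψ a₀ S ε₅ u v : ℝ)) / ((S.card : ℝ) ^ 2)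

/-- E_{u,v}[I(u,v)²] for u,v independent uniform on S. -/
def EI2 (ψ : CSP n A) (a₀ : A) (S : Finset (Vtx n ρ A)) (ε₅ : ℝ) : ℝ :=
  (∑ u ∈ S, ∑ v ∈ S, (Icnt ψ a₀ S ε₅ u v : ℝ) ^ 2) / ((S.card : ℝ) ^ 2)

end

/-! ### Entropies as averages over the sample set -/

/-- Under the uniform distribution on `S`, the entropy of `f` is the average over `v ∈ S` of
`log₂ (|S| / |fibre of v|)`; in this form it only depends on the partition induced by `f`. -/
lemma fEnt_eq_avg {V B : Type*} [Fintype B] (S : Finset V) (f : V → B) :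
    fEnt S f = (1 / (S.card : ℝ)) * ∑ v ∈ S, (Real.logb 2 S.card -
      Real.logb 2 ((S.filter fun u => f u = f v).card : ℝ)) := by
  unfold fEnt
  rw [← Finset.sum_fiberwise S f, Finset.mul_sum]
  refine Finset.sum_congr rfl fun b _ => ?_
  have h : ∀ v ∈ S.filter (fun v => f v = b),
      (Real.logb 2 S.card - Real.logb 2 ((S.filter fun u => f u = f v).card : ℝ)) =
      (Real.logb 2 S.card - Real.logb 2 ((S.filter fun u => f u = b).card : ℝ)) := by
    intro v hv
    rw [(Finset.mem_filter.mp hv).2]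
  rw [Finset.sum_congr rfl h, Finset.sum_const, nsmul_eq_mul]
  rcases Nat.eq_zero_or_pos (S.filter fun u => f u = b).card with h0 | h0
  · rw [h0]; simp
  · have hS : 0 < S.card := h0.trans_le (Finset.card_filter_le _ _)
    rw [Real.logb_div (by positivity) (by positivity)]
    ring

/-- The conditional analogue of `fEnt_eq_avg`. -/
lemma cEnt_eq_avg {V B C : Type*} [Fintype B] [Fintype C] (S : Finset V) (f : V → B) (g : V → C) :
    cEnt S f g = (1 / (S.card : ℝ)) * ∑ v ∈ S,
      (Real.logb 2 ((S.filter fun u => g u = g v).card : ℝ) -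
        Real.logb 2 ((S.filter fun u => g u = g v ∧ f u = f v).card : ℝ)) := by
  unfold cEnt
  rw [← Finset.sum_fiberwise S g, Finset.mul_sum]
  refine Finset.sum_congr rfl fun c _ => ?_
  rw [fEnt_eq_avg]
  have h : ∀ v ∈ S.filter (fun v => g v = c),
      (Real.logb 2 ((S.filter fun u => g u = g v).card : ℝ) -
        Real.logb 2 ((S.filter fun u => g u = g v ∧ f u = f v).card : ℝ)) =
      (Real.logb 2 ((S.filter fun u => g u = c).card : ℝ) -
        Real.logb 2 (((S.filter fun u => g u = c).filter fun u => f u = f v).card : ℝ)) := by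
    intro v hv
    rw [(Finset.mem_filter.mp hv).2, Finset.filter_filter]
  rw [Finset.sum_congr rfl h]
  rcases Nat.eq_zero_or_pos (S.filter fun u => g u = c).card with h0 | h0
  · rw [Finset.card_eq_zero.mp h0]; simp
  · have hS : 0 < S.card := h0.trans_le (Finset.card_filter_le _ _)
    field_simp

lemma binEnt_eq (p : ℝ) : binEnt p = (1 / Real.log 2) * Real.binEntropy p := by
  unfold binEnt Real.binEntropy Real.logb
  rw [Real.log_inv, Real.log_inv]
  ring

lemma concaveOn_binEnt : ConcaveOn ℝ (Set.Icc 0 1) binEnt := by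
  have h := Real.strictConcave_binEntropy.concaveOn.smul
    (show (0 : ℝ) ≤ 1 / Real.log 2 by positivity)
  have e : binEnt = fun p => (1 / Real.log 2) • Real.binEntropy p := funext binEnt_eq
  rw [e]; exact h

lemma prS_mem {V : Type*} (S : Finset V) (P : V → Prop) : prS S P ∈ Set.Icc (0 : ℝ) 1 := by
  unfold prS
  refine ⟨by positivity, div_le_one_of_le₀ ?_ (by positivity)⟩
  exact_mod_cast Finset.card_filter_le _ _

lemma prS_eq {V : Type*} (S : Finset V) (P : V → Prop) [DecidablePred P] :
    prS S P = ((S.filter P).card : ℝ) / (S.card : ℝ) := by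
  unfold prS
  congr!

lemma fEnt_bool {V : Type*} (S : Finset V) (f : V → Bool) :
    fEnt S f = binEnt (prS S fun v => f v = true) := by
  have e : fEnt S f = ∑ b : Bool,
    -(prS S (fun v => f v = b) * Real.logb 2 (prS S fun v => f v = b)) := rfl
  rw [e, Fintype.sum_bool]
  unfold binEnt
  rcases Nat.eq_zero_or_pos S.card with h0 | h0
  · rw [Finset.card_eq_zero.mp h0]; simp [prS]
  · have h := Finset.card_filter_add_card_filter_not (s := S) (fun v => f v = true)
    have h' : (1 : ℝ) - prS S (fun v => f v = true) = prS S (fun v => f v = false) := by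
      simp only [Bool.not_eq_true] at h
      have h0' : (0 : ℝ) < S.card := by exact_mod_cast h0
      rw [prS_eq, prS_eq, sub_eq_iff_eq_add, ← add_div, eq_div_iff h0'.ne', one_mul, ← h]
      push_cast
      ring
    rw [h']
    ring

lemma sum_prS_fiber {V C : Type*} [Fintype C] (S : Finset V) (hS : 0 < S.card) (g : V → C) :
    ∑ c : C, ((S.filter fun v => g v = c).card : ℝ) / (S.card : ℝ) = 1 := by
  rw [← Finset.sum_div, div_eq_one_iff_eq (by positivity)]
  exact_mod_cast (Finset.card_eq_sum_card_fiberwise (f := g) (t := univ) (by simp)).symm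

/-- Conditioning does not increase the entropy of a Boolean variable. -/
lemma cEnt_bool_le {V C : Type*} [Fintype C] (S : Finset V) (hS : 0 < S.card)
    (f : V → Bool) (g : V → C) :
    cEnt S f g ≤ binEnt (prS S fun v => f v = true) := by
  unfold cEnt
  simp_rw [fEnt_bool]
  have h := concaveOn_binEnt.le_map_sum (t := (univ : Finset C))
    (w := fun c => ((S.filter fun v => g v = c).card : ℝ) / (S.card : ℝ))
    (p := fun c => prS (S.filter fun v => g v = c) fun v => f v = true)
    (fun _ _ => by positivity) (sum_prS_fiber S hS g) (fun _ _ => prS_mem _ _)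
  simp only [smul_eq_mul] at h
  refine h.trans (le_of_eq ?_)
  congr 1
  have e : ∀ c : C, ((S.filter fun v => g v = c).card : ℝ) / (S.card : ℝ) *
      prS (S.filter fun v => g v = c) (fun v => f v = true) =
      (((S.filter fun v => f v = true).filter fun v => g v = c).card : ℝ) / (S.card : ℝ) := by
    intro c
    rw [prS_eq, Finset.filter_comm]
    rcases Nat.eq_zero_or_pos (S.filter fun u => g u = c).card with h0 | h0
    · rw [Finset.filter_comm, Finset.card_eq_zero.mp h0]; simp
    · field_simp
  simp_rw [e]
  rw [← Finset.sum_div, prS_eq]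
  congr 1
  exact_mod_cast (Finset.card_eq_sum_card_fiberwise (f := g) (t := univ) (by simp)).symm

/-- The uniform distribution maximises entropy. -/
lemma fEnt_le_logb_card {V B : Type*} [Fintype B] [Nonempty B] (S : Finset V) (f : V → B) :
    fEnt S f ≤ Real.logb 2 (Fintype.card B) := by
  have hB : (0 : ℝ) < Fintype.card B := by exact_mod_cast Fintype.card_pos
  rcases Nat.eq_zero_or_pos S.card with h0 | h0
  · rw [Finset.card_eq_zero.mp h0]
    have : fEnt (∅ : Finset V) f = 0 := by simp [fEnt]
    rw [this]
    exact Real.logb_nonneg (by norm_num) (by exact_mod_cast Fintype.card_pos)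
  · have hJ := Real.concaveOn_negMulLog.le_map_sum (t := (univ : Finset B))
      (w := fun _ => 1 / (Fintype.card B : ℝ))
      (p := fun b => ((S.filter fun v => f v = b).card : ℝ) / (S.card : ℝ))
      (fun _ _ => by positivity) (by simp) (fun _ _ => by simp only [Set.mem_Ici]; positivity)
    simp only [smul_eq_mul] at hJ
    rw [← Finset.mul_sum, ← Finset.mul_sum, sum_prS_fiber S h0 f] at hJ
    have e : fEnt S f = (1 / Real.log 2) * ∑ b : B, Real.negMulLog
        (((S.filter fun v => f v = b).card : ℝ) / (S.card : ℝ)) := by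
      unfold fEnt Real.negMulLog Real.logb
      rw [Finset.mul_sum]
      refine Finset.sum_congr rfl fun b _ => ?_
      ring
    rw [e]
    unfold Real.logb
    rw [div_eq_mul_one_div (Real.log _), mul_comm]
    refine mul_le_mul_of_nonneg_right ?_ (by positivity)
    rw [Real.negMulLog, mul_one, Real.log_div one_ne_zero hB.ne', Real.log_one] at hJ
    have hJ' := mul_le_mul_of_nonneg_left hJ hB.le
    rw [← mul_assoc, mul_one_div_cancel hB.ne', one_mul] at hJ'
    refine hJ'.trans (le_of_eq ?_)
    field_simp
    ring

lemma fEnt_const {V B : Type*} [Fintype B] (S : Finset V) (f : V → B) (b : B)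
    (h : ∀ v ∈ S, f v = b) : fEnt S f = 0 := by
  rw [fEnt_eq_avg]
  refine mul_eq_zero_of_right _ (Finset.sum_eq_zero fun v hv => ?_)
  rw [Finset.filter_true_of_mem (fun u hu => by rw [h u hu, h v hv]), sub_self]

/-- If `f` is constant unless `g` satisfies `P`, then only the event `P` contributes to
`H(f | g)`. -/
lemma cEnt_le_of_const {V B C : Type*} [Fintype B] [Fintype C] (S : Finset V) (f : V → B)
    (g : V → C) (P : C → Prop) (b : B) (h : ∀ v, ¬ P (g v) → f v = b) :
    cEnt S f g ≤ prS S (fun v => P (g v)) * Real.logb 2 (Fintype.card B) := by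
  have : Nonempty B := ⟨b⟩
  have hL : 0 ≤ Real.logb 2 (Fintype.card B) :=
    Real.logb_nonneg (by norm_num) (by exact_mod_cast Fintype.card_pos)
  have hP : prS S (fun v => P (g v)) = ∑ c : C,
      (((S.filter fun v => P (g v)).filter fun v => g v = c).card : ℝ) / (S.card : ℝ) := by
    unfold prS
    rw [← Finset.sum_div]
    congr 1
    exact_mod_cast Finset.card_eq_sum_card_fiberwise (f := g) (t := univ) (by simp)
  unfold cEnt
  rw [hP, Finset.sum_mul]
  refine Finset.sum_le_sum fun c _ => ?_
  by_cases hc : P c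
  · have e : (S.filter fun v => P (g v)).filter (fun v => g v = c) =
        S.filter fun v => g v = c := by
      ext v
      simp only [Finset.mem_filter]
      exact ⟨fun hv => ⟨hv.1.1, hv.2⟩, fun hv => ⟨⟨hv.1, by rw [hv.2]; exact hc⟩, hv.2⟩⟩
    rw [e]
    exact mul_le_mul_of_nonneg_left (fEnt_le_logb_card _ _) (by positivity)
  · rw [fEnt_const _ f b fun v hv => h v (by rw [(Finset.mem_filter.mp hv).2]; exact hc), mul_zero]
    positivity

/-! ### Chain rule and bounds for the prefix entropies -/

section Prefix

/-- Equivalent predicates have filters of equal size, whatever their decidability instances. -/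
lemma card_filter_iff {V : Type*} (S : Finset V) {P Q : V → Prop} {iP : DecidablePred P}
    {iQ : DecidablePred Q} (h : ∀ v, P v ↔ Q v) : (S.filter P).card = (S.filter Q).card := by
  obtain rfl : P = Q := funext fun v => propext (h v)
  congr!

variable {n ρ : ℕ} {A : Type*}

/-- The Boolean `X_i` and the label `Y_i` are exactly what the prefix gains at step `i`. -/
lemma Wp_succ_eq_iff (a₀ : A) (i : Fin n) (u v : Vtx n ρ A) :
    Wp a₀ ((i : ℕ) + 1) u = Wp a₀ ((i : ℕ) + 1) v ↔
      (Wp a₀ (i : ℕ) u = Wp a₀ (i : ℕ) v ∧ Xb u i = Xb v i) ∧ Yv a₀ u i = Yv a₀ v i := by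
  unfold Wp
  simp only [Prod.mk.injEq, funext_iff]
  constructor
  · rintro ⟨h1, h2⟩
    refine ⟨⟨⟨fun j => ?_, fun j => ?_⟩, ?_⟩, ?_⟩
    · have := h1 j
      by_cases hj : (j : ℕ) < i
      · simpa [hj, Nat.lt_succ_of_lt hj] using this
      · simp [hj]
    · have := h2 j
      by_cases hj : (j : ℕ) < i
      · simpa [hj, Nat.lt_succ_of_lt hj] using this
      · simp [hj]
    · simpa using h1 i
    · simpa using h2 i
  · rintro ⟨⟨⟨h1, h2⟩, h3⟩, h4⟩
    refine ⟨fun j => ?_, fun j => ?_⟩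
    · have := h1 j
      by_cases hj : (j : ℕ) < i
      · simpa [hj, Nat.lt_succ_of_lt hj] using this
      · by_cases hj' : j = i
        · subst hj'; simpa using h3
        · have : ¬ (j : ℕ) < i + 1 := fun h => hj' (Fin.ext (by omega))
          simp [this]
    · have := h2 j
      by_cases hj : (j : ℕ) < i
      · simpa [hj, Nat.lt_succ_of_lt hj] using this
      · by_cases hj' : j = i
        · subst hj'; simpa using h4
        · have : ¬ (j : ℕ) < i + 1 := fun h => hj' (Fin.ext (by omega))
          simp [this]

/-- The full prefix determines the vertex. -/
lemma Wp_full_injective (a₀ : A) : Function.Injective (Wp (n := n) (ρ := ρ) a₀ n) := by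
  rintro ⟨⟨T, hT⟩, y⟩ ⟨⟨T', hT'⟩, y'⟩ h
  unfold Wp at h
  simp only [Prod.mk.injEq, funext_iff, Fin.is_lt, if_true] at h
  obtain ⟨h1, h2⟩ := h
  have hTT : T = T' := by
    ext j
    have := h1 j
    simpa [Xb] using this
  subst hTT
  congr 1
  funext j
  have := h2 j.1
  simpa [Yv, j.2] using this

/-- Every vertex chooses exactly `ρ` variables. -/
lemma sum_qi (S : Finset (Vtx n ρ A)) (hS : 0 < S.card) : ∑ i, qi S i = ρ := by
  unfold qi prS
  rw [← Finset.sum_div, div_eq_iff (by positivity)]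
  have h := Finset.sum_card_bipartiteAbove_eq_sum_card_bipartiteBelow
    (s := S) (t := (univ : Finset (Fin n))) (fun v i => Xb v i = true)
  have h2 : ∀ v ∈ S, (Finset.bipartiteAbove (fun v i => Xb v i = true) univ v).card = ρ := by
    intro v _
    refine Eq.trans (congrArg Finset.card ?_) v.1.2
    ext j
    simp [Finset.bipartiteAbove, Xb]
  rw [Finset.sum_congr rfl h2, Finset.sum_const, smul_eq_mul] at h
  rw [← Nat.cast_sum, ← Nat.cast_mul, mul_comm ρ, h]
  congr 1
  refine Finset.sum_congr rfl fun i _ => ?_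
  unfold Finset.bipartiteBelow
  congr!

lemma sum_binEnt_le (S : Finset (Vtx n ρ A)) (hS : 0 < S.card) (hn : 0 < n) :
    ∑ i, binEnt (qi S i) ≤ n * binEnt (ρ / n) := by
  have h := concaveOn_binEnt.le_map_sum (t := (univ : Finset (Fin n)))
    (w := fun _ => 1 / (n : ℝ)) (p := fun i => qi S i)
    (fun _ _ => by positivity) (by simp [hn.ne']) (fun _ _ => prS_mem _ _)
  simp only [smul_eq_mul] at h
  rw [← Finset.mul_sum, ← Finset.mul_sum, sum_qi S hS] at h
  have hn' : (0 : ℝ) < n := by exact_mod_cast hn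
  rw [one_div_mul_eq_div, one_div_mul_eq_div, div_le_iff₀ hn'] at h
  linarith

variable [Fintype A]

lemma alpha_add_beta [DecidableEq A] (a₀ : A) (S : Finset (Vtx n ρ A)) (i : Fin n) :
    alphaE a₀ S i + betaE a₀ S i = (1 / (S.card : ℝ)) * ∑ v ∈ S,
      (Real.logb 2 ((S.filter fun u => Wp a₀ (i : ℕ) u = Wp a₀ (i : ℕ) v).card : ℝ) -
       Real.logb 2 ((S.filter fun u => Wp a₀ ((i : ℕ) + 1) u =
          Wp a₀ ((i : ℕ) + 1) v).card : ℝ)) := by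
  unfold alphaE betaE
  rw [cEnt_eq_avg, cEnt_eq_avg, ← mul_add, ← Finset.sum_add_distrib]
  congr 1
  refine Finset.sum_congr rfl fun v _ => ?_
  have key : ∀ a a' b c d d' : ℝ, a = a' → b = c → d = d' → a - b + (c - d) = a' - d' := by
    rintro a a' b c d d' rfl rfl rfl
    ring
  refine key _ _ _ _ _ _ ?_ ?_ ?_
  · exact congrArg (fun m : ℕ => Real.logb 2 (m : ℝ)) (card_filter_iff S fun u => Iff.rfl)
  · exact congrArg (fun m : ℕ => Real.logb 2 (m : ℝ)) (card_filter_iff S fun u =>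
      Prod.mk_inj.symm)
  · exact congrArg (fun m : ℕ => Real.logb 2 (m : ℝ)) (card_filter_iff S fun u => by
      rw [Wp_succ_eq_iff, Prod.mk.injEq])

/-- Chain rule: the entropies `α_i + β_i` add up to the entropy `log₂ |S|` of the uniform
vertex. -/
lemma sum_alpha_add_beta [DecidableEq A] (a₀ : A) (S : Finset (Vtx n ρ A)) (hS : 0 < S.card) :
    ∑ i, (alphaE a₀ S i + betaE a₀ S i) = Real.logb 2 S.card := by
  simp_rw [alpha_add_beta]
  rw [← Finset.mul_sum, Finset.sum_comm]
  have h : ∀ v ∈ S, ∑ i : Fin n,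
      (Real.logb 2 ((S.filter fun u => Wp a₀ (i : ℕ) u = Wp a₀ (i : ℕ) v).card : ℝ) -
       Real.logb 2 ((S.filter fun u => Wp a₀ ((i : ℕ) + 1) u =
          Wp a₀ ((i : ℕ) + 1) v).card : ℝ)) = Real.logb 2 S.card := by
    intro v hv
    rw [Fin.sum_univ_eq_sum_range (fun i =>
      (Real.logb 2 ((S.filter fun u => Wp a₀ i u = Wp a₀ i v).card : ℝ) -
       Real.logb 2 ((S.filter fun u => Wp a₀ (i + 1) u = Wp a₀ (i + 1) v).card : ℝ))) n,
      Finset.sum_range_sub']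
    have h1 : (S.filter fun u => Wp a₀ 0 u = Wp a₀ 0 v) = S := by
      refine Finset.filter_true_of_mem fun u _ => ?_
      simp [Wp]
    have h2 : (S.filter fun u => Wp a₀ n u = Wp a₀ n v) = {v} := by
      ext u
      simp only [Finset.mem_filter, Finset.mem_singleton]
      exact ⟨fun h => Wp_full_injective a₀ h.2, fun h => by subst h; exact ⟨hv, rfl⟩⟩
    rw [h1, h2]
    simp
  rw [Finset.sum_congr rfl h, Finset.sum_const, nsmul_eq_mul]
  field_simp

lemma alphaE_le [DecidableEq A] (a₀ : A) (S : Finset (Vtx n ρ A)) (hS : 0 < S.card) (i : Fin n) :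
    alphaE a₀ S i ≤ binEnt (qi S i) := cEnt_bool_le S hS _ _

/-- When `i` is not chosen, `Y_i` is the default symbol and carries no entropy. -/
lemma betaE_le [DecidableEq A] (a₀ : A) (S : Finset (Vtx n ρ A)) (i : Fin n) :
    betaE a₀ S i ≤ qi S i * Real.logb 2 (Fintype.card A) := by
  refine cEnt_le_of_const S (fun v => Yv a₀ v i) (fun v => (Wp a₀ (i : ℕ) v, Xb v i))
    (fun c => c.2 = true) a₀ fun v hv => ?_
  have hx : i ∉ v.1.1 := by simpa [Xb] using hv
  simp [Yv, hx]

end Prefix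

/-! ### Binary entropy against the binomial coefficient -/

/-- In the expansion of `(ρ + (n - ρ))^n` the term of index `ρ` is the largest. -/
lemma binomial_term_le (n ρ j : ℕ) (hρ : ρ ≤ n) (hj : j ≤ n) :
    ρ ^ j * (n - ρ) ^ (n - j) * n.choose j ≤ ρ ^ ρ * (n - ρ) ^ (n - ρ) * n.choose ρ := by
  set t : ℕ → ℕ := fun j => ρ ^ j * (n - ρ) ^ (n - j) * n.choose j with ht
  obtain ⟨m, rfl⟩ := Nat.exists_eq_add_of_le hρ
  have hm : ρ + m - ρ = m := by omega
  -- Consecutive terms satisfy `t (j+1) * ((j+1) * m) = t j * ((n-j) * ρ)`.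
  have hrec : ∀ j, j < ρ + m → t (j + 1) * ((j + 1) * m) = t j * ((ρ + m - j) * ρ) := by
    intro j hj
    have hc := Nat.choose_succ_right_eq (ρ + m) j
    have he : ρ + m - j = (ρ + m - (j + 1)) + 1 := by omega
    simp only [ht, hm]
    rw [show m ^ (ρ + m - j) = m ^ (ρ + m - (j + 1)) * m by rw [← pow_succ, ← he], pow_succ ρ]
    calc _ = ρ ^ j * m ^ (ρ + m - (j + 1)) * ρ * m *
        ((ρ + m).choose (j + 1) * (j + 1)) := by ring
      _ = _ := by rw [hc]; ring
  rcases Nat.eq_zero_or_pos m with h0 | hmpos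
  · subst h0
    simp only [Nat.add_zero] at hj ⊢
    rcases hj.eq_or_lt with h | h
    · rw [h]
    · simp [Nat.sub_ne_zero_of_lt h]
  have hup : ∀ j, j < ρ → t j ≤ t (j + 1) := by
    intro j hj
    have h := hrec j (by omega)
    have hle : (j + 1) * m ≤ (ρ + m - j) * ρ := by
      obtain ⟨d, rfl⟩ := Nat.exists_eq_add_of_lt hj
      rw [show j + d + 1 + m - j = d + 1 + m by omega]
      nlinarith
    have hpos : 0 < (j + 1) * m := by positivity
    refine Nat.le_of_mul_le_mul_right ?_ hpos
    rw [h]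
    exact Nat.mul_le_mul_left _ hle
  have hdown : ∀ j, ρ ≤ j → j < ρ + m → t (j + 1) ≤ t j := by
    intro j hj1 hj2
    have h := hrec j hj2
    have hle : (ρ + m - j) * ρ ≤ (j + 1) * m := by
      obtain ⟨d, rfl⟩ := Nat.exists_eq_add_of_le hj1
      have : ρ + m - (ρ + d) ≤ m := by omega
      calc _ ≤ m * ρ := Nat.mul_le_mul_right _ this
        _ ≤ _ := by nlinarith
    have hpos : 0 < (j + 1) * m := by positivity
    refine Nat.le_of_mul_le_mul_right ?_ hpos
    rw [h]
    exact Nat.mul_le_mul_left _ hle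
  change t j ≤ t ρ
  rcases le_total j ρ with h | h
  · exact Nat.decreasingInduction (motive := fun k _ => t k ≤ t ρ)
      (fun k hk ih => (hup k hk).trans ih) le_rfl h
  · induction j, h using Nat.le_induction with
    | base => exact le_rfl
    | succ k hk ih => exact (hdown k hk (by omega)).trans (ih (by omega))

lemma pow_le_choose_mul (n ρ : ℕ) (hρ : ρ ≤ n) :
    n ^ n ≤ (n + 1) * (ρ ^ ρ * (n - ρ) ^ (n - ρ) * n.choose ρ) := by
  have h := add_pow ρ (n - ρ) n
  rw [Nat.add_sub_cancel' hρ] at h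
  calc n ^ n = _ := h
    _ ≤ ∑ _j ∈ Finset.range (n + 1), (ρ ^ ρ * (n - ρ) ^ (n - ρ) * n.choose ρ) :=
        Finset.sum_le_sum fun j hj =>
          binomial_term_le n ρ j hρ (Nat.lt_succ_iff.mp (Finset.mem_range.mp hj))
    _ = _ := by simp

/-- `n H(ρ/n)` exceeds `log₂ C(n, ρ)` by at most `log₂ (n + 1)`. -/
lemma mul_binEnt_le (n ρ : ℕ) (h0 : 0 < ρ) (hρ : ρ < n) :
    n * binEnt (ρ / n) ≤ Real.logb 2 (n + 1) + Real.logb 2 (n.choose ρ) := by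
  have h := pow_le_choose_mul n ρ hρ.le
  obtain ⟨m, rfl⟩ := Nat.exists_eq_add_of_lt hρ
  set M := m + 1 with hM
  have hsub : ρ + m + 1 - ρ = M := by omega
  have hn : ρ + m + 1 = ρ + M := by omega
  rw [hsub] at h
  rw [hn] at h ⊢
  have hρ0 : (0 : ℝ) < ρ := by exact_mod_cast h0
  have hM0 : (0 : ℝ) < M := by exact_mod_cast Nat.succ_pos m
  have hc0 : (0 : ℝ) < ((ρ + M).choose ρ : ℝ) := by
    exact_mod_cast Nat.choose_pos (by omega)
  have hR : ((ρ + M : ℕ) : ℝ) ^ (ρ + M) ≤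
      ((ρ + M : ℕ) + 1 : ℝ) * ((ρ : ℝ) ^ ρ * (M : ℝ) ^ M * ((ρ + M).choose ρ : ℝ)) := by
    exact_mod_cast h
  have hN0 : (0 : ℝ) < ((ρ + M : ℕ) : ℝ) := by push_cast; positivity
  have hl := Real.logb_le_logb_of_le (b := 2) (by norm_num) (by positivity) hR
  rw [Real.logb_mul (by positivity) (by positivity), Real.logb_mul (by positivity) (by positivity),
    Real.logb_mul (by positivity) (by positivity), Real.logb_pow, Real.logb_pow,
    Real.logb_pow] at hl
  have h1 : (1 : ℝ) - (ρ : ℝ) / ((ρ + M : ℕ) : ℝ) = (M : ℝ) / ((ρ + M : ℕ) : ℝ) := by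
    field_simp
    push_cast
    ring
  unfold binEnt
  rw [h1, Real.logb_div hρ0.ne' hN0.ne', Real.logb_div hM0.ne' hN0.ne']
  have e : ((ρ + M : ℕ) : ℝ) * (-((ρ : ℝ) / ((ρ + M : ℕ) : ℝ) *
      (Real.logb 2 ρ - Real.logb 2 ((ρ + M : ℕ) : ℝ))) - (M : ℝ) / ((ρ + M : ℕ) : ℝ) *
      (Real.logb 2 M - Real.logb 2 ((ρ + M : ℕ) : ℝ))) =
      ((ρ + M : ℕ) : ℝ) * Real.logb 2 ((ρ + M : ℕ) : ℝ) - ρ * Real.logb 2 ρ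
        - M * Real.logb 2 M := by
    field_simp
    push_cast
    ring
  rw [e]
  linarith

/-! ### Asymptotic estimates for `ρ`, `k`, `N` and `k'` -/

lemma eventually_logb_le (r c : ℝ) (hr : 0 < r) (hc : 0 < c) :
    ∀ᶠ n : ℕ in Filter.atTop, Real.logb 2 n ≤ c * (n : ℝ) ^ r := by
  have h := (isLittleO_log_rpow_atTop hr).bound (show 0 < c * Real.log 2 by positivity)
  filter_upwards [tendsto_natCast_atTop_atTop.eventually h, Filter.eventually_ge_atTop 1]
    with n hn hn1
  have h1 : (1 : ℝ) ≤ n := by exact_mod_cast hn1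
  rw [Real.norm_of_nonneg (Real.log_nonneg h1), Real.norm_of_nonneg (by positivity)] at hn
  rw [Real.logb, div_le_iff₀ (Real.log_pos (by norm_num))]
  linarith

lemma eventually_const_le_rpow (r c : ℝ) (hr : 0 < r) :
    ∀ᶠ n : ℕ in Filter.atTop, c ≤ (n : ℝ) ^ r :=
  ((tendsto_rpow_atTop hr).comp tendsto_natCast_atTop_atTop).eventually_ge_atTop c

lemma eventually_const_le_logb (c : ℝ) :
    ∀ᶠ n : ℕ in Filter.atTop, c ≤ Real.logb 2 n :=
  ((Real.tendsto_logb_atTop (by norm_num)).comp tendsto_natCast_atTop_atTop).eventually_ge_atTop c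

/-- The numerical input on `ρ`: it lies between `√n` and `n^{0.6} / 2`. -/
lemma rho_bounds : ∀ᶠ n : ℕ in Filter.atTop,
    (n : ℝ) ^ (0.5 : ℝ) ≤ rho n ∧ (rho n : ℝ) ≤ (n : ℝ) ^ (0.6 : ℝ) / 2 := by
  filter_upwards [eventually_logb_le 0.1 (1/4) (by norm_num) (by norm_num),
    eventually_const_le_rpow 0.6 4 (by norm_num), eventually_const_le_logb 4,
    Filter.eventually_ge_atTop 1] with n h1 h2 h3 h4
  have hx : (0 : ℝ) < n := by exact_mod_cast h4
  set l := Real.logb 2 n with hl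
  have hs : Real.sqrt n = (n : ℝ) ^ (0.5 : ℝ) := by rw [Real.sqrt_eq_rpow]; norm_num
  have hll1 : 1 ≤ Real.logb 2 l := by
    rw [Real.le_logb_iff_rpow_le (by norm_num) (by linarith)]
    norm_num; linarith
  have hll2 : Real.logb 2 l ≤ l := by
    rw [Real.logb_le_iff_le_rpow (by norm_num) (by linarith)]
    have h := one_add_mul_self_le_rpow_one_add (s := 1) (by norm_num) (p := l) (by linarith)
    norm_num at h
    linarith
  have hpos : (0 : ℝ) < (n : ℝ) ^ (0.5 : ℝ) := by positivity
  unfold rho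
  rw [← hl, hs]
  constructor
  · refine le_trans ?_ (Nat.le_ceil _)
    nlinarith
  · refine (Nat.ceil_lt_add_one (by positivity)).le.trans ?_
    have h5 : (n : ℝ) ^ (0.5 : ℝ) * Real.logb 2 l ≤ (n : ℝ) ^ (0.6 : ℝ) / 4 := by
      calc (n : ℝ) ^ (0.5 : ℝ) * Real.logb 2 l
          ≤ (n : ℝ) ^ (0.5 : ℝ) * (1/4 * (n : ℝ) ^ (0.1 : ℝ)) :=
            mul_le_mul_of_nonneg_left (hll2.trans h1) hpos.le
        _ = ((n : ℝ) ^ (0.5 : ℝ) * (n : ℝ) ^ (0.1 : ℝ)) / 4 := by ring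
        _ = _ := by rw [← Real.rpow_add hx]; norm_num
    linarith

/-- For `r ≤ n^{0.6} / 2` the bound `C(n, r) ≥ (n / 2r)^r` gives `C(n, r) ≥ n^{0.4 r}`. -/
lemma logb_choose_ge (n r : ℕ) (hn : 0 < n) (hr : 0 < r)
    (h : (r : ℝ) ≤ (n : ℝ) ^ (0.6 : ℝ) / 2) :
    0.4 * r * Real.logb 2 n ≤ Real.logb 2 (n.choose r) := by
  have hx : (1 : ℝ) ≤ n := by exact_mod_cast hn
  have hr0 : (0 : ℝ) < r := by exact_mod_cast hr
  have h6 : (n : ℝ) ^ (0.6 : ℝ) ≤ n := by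
    calc (n : ℝ) ^ (0.6 : ℝ) ≤ (n : ℝ) ^ (1 : ℝ) :=
          Real.rpow_le_rpow_of_exponent_le hx (by norm_num)
      _ = n := Real.rpow_one _
  have hrn : r ≤ n := by
    have : (r : ℝ) ≤ n := by linarith
    exact_mod_cast this
  have hc := Nat.pow_le_choose (α := ℝ) r n
  have hf : ((r.factorial : ℕ) : ℝ) ≤ (r : ℝ) ^ r := by exact_mod_cast Nat.factorial_le_pow r
  have hf0 : (0 : ℝ) < ((r.factorial : ℕ) : ℝ) := by exact_mod_cast Nat.factorial_pos r
  have hb : (n : ℝ) ^ (0.4 : ℝ) * r ≤ ((n + 1 - r : ℕ) : ℝ) := by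
    rw [Nat.cast_sub (by omega)]
    push_cast
    have : (n : ℝ) ^ (0.4 : ℝ) * r ≤ n / 2 := by
      calc (n : ℝ) ^ (0.4 : ℝ) * r ≤ (n : ℝ) ^ (0.4 : ℝ) * ((n : ℝ) ^ (0.6 : ℝ) / 2) :=
            mul_le_mul_of_nonneg_left h (by positivity)
        _ = ((n : ℝ) ^ (0.4 : ℝ) * (n : ℝ) ^ (0.6 : ℝ)) / 2 := by ring
        _ = n / 2 := by rw [← Real.rpow_add (by linarith)]; norm_num
    linarith
  have hk : ((n : ℝ) ^ (0.4 : ℝ)) ^ r ≤ n.choose r := by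
    refine le_trans ?_ hc
    rw [le_div_iff₀ hf0]
    calc ((n : ℝ) ^ (0.4 : ℝ)) ^ r * (r.factorial : ℝ)
        ≤ ((n : ℝ) ^ (0.4 : ℝ)) ^ r * (r : ℝ) ^ r :=
          mul_le_mul_of_nonneg_left hf (by positivity)
      _ = ((n : ℝ) ^ (0.4 : ℝ) * r) ^ r := by rw [mul_pow]
      _ ≤ _ := pow_le_pow_left₀ (by positivity) hb _
  have hl := Real.logb_le_logb_of_le (b := 2) (by norm_num) (by positivity) hk
  rw [Real.logb_pow, Real.logb_rpow_eq_mul_logb_of_pos (by linarith)] at hl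
  linarith

/-- All the estimates used on `n`: the last conjunct bounds the gap between the upper bound
`log₂ (n + 1) + log₂ k` for `∑ α_i` and the lower bound `log₂ k' - 1` for `log₂ |S|`. -/
lemma asymptotics (a : ℕ) (ha : 2 ≤ a) (ε₀ ε₁ : ℝ) (hε₀ : 0 < ε₀) (hε₁ : 0 < ε₁ ∧ ε₁ < 1)
    (h₅ : ε₁ ≥ 5 * ε₀) : ∀ᶠ n : ℕ in Filter.atTop,
      0 < rho n ∧ rho n < n ∧ 0.4 * (rho n : ℝ) ≤ Real.logb 2 (kk n) / Real.logb 2 n ∧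
      1 ≤ kprime n a ε₀ ∧
      Real.logb 2 (n + 1) + Real.logb 2 (kk n) - (Real.logb 2 (kprime n a ε₀) - 1) ≤
        1.5 * ε₁ * (Real.logb 2 (kk n) / Real.logb 2 n) := by
  obtain ⟨he0, he1⟩ := hε₁
  filter_upwards [rho_bounds, eventually_logb_le 0.5 (0.07 * ε₁) (by norm_num) (by positivity),
    eventually_const_le_rpow 0.5 (1 / (0.14 * ε₁)) (by norm_num),
    eventually_const_le_logb 4, eventually_const_le_logb (2.5 * Real.logb 2 a),
    Filter.eventually_ge_atTop 2] with n hρ h1 h2 h3 h4 hn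
  obtain ⟨hρ1, hρ2⟩ := hρ
  have hx : (2 : ℝ) ≤ n := by exact_mod_cast hn
  have ha' : (2 : ℝ) ≤ a := by exact_mod_cast ha
  have hρ0 : (0 : ℝ) < rho n := lt_of_lt_of_le (by positivity) hρ1
  have hρ0' : 0 < rho n := by exact_mod_cast hρ0
  have h6 : (n : ℝ) ^ (0.6 : ℝ) ≤ n := by
    calc (n : ℝ) ^ (0.6 : ℝ) ≤ (n : ℝ) ^ (1 : ℝ) :=
          Real.rpow_le_rpow_of_exponent_le (by linarith) (by norm_num)
      _ = n := Real.rpow_one _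
  have hρn : rho n < n := by
    have : (rho n : ℝ) < n := by linarith
    exact_mod_cast this
  have hk := logb_choose_ge n (rho n) (by omega) hρ0' hρ2
  change _ ≤ Real.logb 2 (kk n) at hk
  have hkpos : (0 : ℝ) < kk n := by exact_mod_cast Nat.choose_pos hρn.le
  set l := Real.logb 2 n with hl
  set K := Real.logb 2 (kk n) with hK
  set L := Real.logb 2 a with hL
  have hL0 : 0 ≤ L := Real.logb_nonneg (by norm_num) (by linarith)
  have hl0 : 0 < l := by linarith
  have hR : 0.4 * (rho n : ℝ) ≤ K / l := by rw [le_div_iff₀ hl0]; exact hk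
  have hK0 : 0 < K := lt_of_lt_of_le (by positivity) hk
  have hNpos : (0 : ℝ) < NN n a := by
    unfold NN; push_cast
    exact mul_pos hkpos (by positivity)
  have hN : Real.logb 2 (NN n a) = K + rho n * L := by
    unfold NN; push_cast
    rw [Real.logb_mul (by exact hkpos.ne') (by positivity), Real.logb_pow]
    rfl
  have hN2 : Real.logb 2 (NN n a) ≤ 2 * K := by
    rw [hN]
    have : (rho n : ℝ) * L ≤ rho n * (0.4 * l) :=
      mul_le_mul_of_nonneg_left (by linarith) hρ0.le
    linarith
  have hN1 : (n : ℝ) ^ (0.5 : ℝ) ≤ Real.logb 2 (NN n a) := by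
    rw [hN]
    have h7 : 0 ≤ (rho n : ℝ) * L := by positivity
    have h8 : (rho n : ℝ) * 4 ≤ rho n * l := mul_le_mul_of_nonneg_left h3 hρ0.le
    linarith
  have hNN : 0.5 * l ≤ Real.logb 2 (Real.logb 2 (NN n a)) := by
    have := Real.logb_le_logb_of_le (b := 2) (by norm_num) (by positivity) hN1
    rwa [Real.logb_rpow_eq_mul_logb_of_pos (by linarith)] at this
  have hk'pos : 0 < kprime n a ε₀ := by unfold kprime; positivity
  have hk' : K - 0.8 * ε₁ * (K / l) ≤ Real.logb 2 (kprime n a ε₀) := by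
    unfold kprime
    rw [Real.logb_mul hkpos.ne' (by positivity), Real.logb_rpow_eq_mul_logb_of_pos hNpos]
    have h9 : ε₀ / Real.logb 2 (Real.logb 2 (NN n a)) ≤ ε₀ / (0.5 * l) :=
      div_le_div_of_nonneg_left hε₀.le (by positivity) hNN
    have h10 : ε₀ / Real.logb 2 (Real.logb 2 (NN n a)) * Real.logb 2 (NN n a) ≤
        ε₀ / (0.5 * l) * (2 * K) :=
      mul_le_mul h9 hN2 (le_trans (by positivity) hN1) (by positivity)
    have h11 : ε₀ / (0.5 * l) * (2 * K) = 4 * ε₀ * (K / l) := by field_simp; norm_num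
    have h12 : 4 * ε₀ * (K / l) ≤ 0.8 * ε₁ * (K / l) :=
      mul_le_mul_of_nonneg_right (by linarith) (by positivity)
    linarith
  refine ⟨hρ0', hρn, hR, ?_, ?_⟩
  · have h13 : K / l ≤ K / 4 := div_le_div_of_nonneg_left hK0.le (by norm_num) h3
    have h14 : 0.8 * ε₁ * (K / l) ≤ 1 * (K / l) :=
      mul_le_mul_of_nonneg_right (by linarith) (by positivity)
    have h15 : 0 ≤ Real.logb 2 (kprime n a ε₀) := by linarith
    exact (Real.logb_nonneg_iff (by norm_num) hk'pos).mp h15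
  · have h16 : Real.logb 2 ((n : ℝ) + 1) ≤ 2 * l := by
      have : (n : ℝ) + 1 ≤ (n : ℝ) ^ 2 := by nlinarith
      have := Real.logb_le_logb_of_le (b := 2) (by norm_num) (by positivity) this
      rwa [Real.logb_pow] at this
    have h17 : 1 ≤ 0.14 * ε₁ * (n : ℝ) ^ (0.5 : ℝ) := by
      rw [div_le_iff₀ (by positivity)] at h2
      linarith
    have h18 : ε₁ * (n : ℝ) ^ (0.5 : ℝ) ≤ ε₁ * (2.5 * (K / l)) :=
      mul_le_mul_of_nonneg_left (by linarith) he0.le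
    linarith

/-! ### The good indices -/

/-- Claim 3.1: if Σ β_i > 5ε₁·log₂ k / log₂ n then the good indices carry
Σ_{good i} q_i² ≥ ((1/5)ε₁ρ)² / (n·(log₂|A|)²). -/
theorem statement_7 (A : Type) [Fintype A] [DecidableEq A] (hA : 2 ≤ Fintype.card A)
    (ε₀ ε₁ : ℝ) (hε₀ : 0 < ε₀) (hε₁ : 0 < ε₁ ∧ ε₁ < 1) (h₅ : ε₁ ≥ 5 * ε₀) :
    ∃ n₀ : ℕ, ∀ n ≥ n₀, ∀ (a₀ : A) (S : Finset (Vtx n (rho n) A)),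
      S.card = ⌊kprime n (Fintype.card A) ε₀⌋₊ →
      (∑ i : Fin n, betaE a₀ S i) > 5 * ε₁ * Real.logb 2 (kk n) / Real.logb 2 n →
      (∑ i ∈ Finset.univ.filter (GoodIdx a₀ S ε₁), qi S i ^ 2) ≥
        ((1 / 5) * ε₁ * (rho n : ℝ)) ^ 2 /
          ((n : ℝ) * (Real.logb 2 (Fintype.card A)) ^ 2) := by
  obtain ⟨n₀, hn₀⟩ := Filter.eventually_atTop.mp
    (asymptotics (Fintype.card A) hA ε₀ ε₁ hε₀ hε₁ h₅)
  refine ⟨n₀, fun n hn a₀ S hcard hβ => ?_⟩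
  obtain ⟨hρ0, hρn, hR, hk1, hgap⟩ := hn₀ n hn
  obtain ⟨he0, he1⟩ := hε₁
  set L := Real.logb 2 (Fintype.card A) with hL
  set R := Real.logb 2 (kk n) / Real.logb 2 n with hRdef
  have hL1 : 1 ≤ L := by
    rw [hL, Real.le_logb_iff_rpow_le (by norm_num) (by positivity), Real.rpow_one]
    exact_mod_cast hA
  have hS : 0 < S.card := by rw [hcard]; exact Nat.floor_pos.mpr hk1
  have hlogS : Real.logb 2 (kprime n (Fintype.card A) ε₀) - 1 ≤ Real.logb 2 S.card := by
    -- Rounding down a real number `≥ 1` costs at most a factor `2`.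
    have h2 : kprime n (Fintype.card A) ε₀ / 2 ≤ (S.card : ℝ) := by
      have h3 := Nat.lt_floor_add_one (kprime n (Fintype.card A) ε₀)
      have h4 : (1 : ℝ) ≤ (S.card : ℝ) := by exact_mod_cast hS
      rw [hcard] at h4 ⊢
      linarith
    have h5 := Real.logb_le_logb_of_le (b := 2) (by norm_num) (by positivity) h2
    rwa [Real.logb_div (by positivity) (by norm_num),
      Real.logb_self_eq_one (by norm_num)] at h5
  have hq0 : ∀ i, 0 ≤ qi S i := fun i => (prS_mem S _).1
  have hqs := sum_qi S hS
  have hα := fun i => alphaE_le a₀ S hS i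
  have hβq := fun i => betaE_le a₀ S i
  have hchain := sum_alpha_add_beta a₀ S hS
  rw [Finset.sum_add_distrib] at hchain
  have hH := (sum_binEnt_le S hS (by omega)).trans (mul_binEnt_le n (rho n) hρ0 hρn)
  change _ ≤ _ + Real.logb 2 (kk n) at hH
  have hβ' : 5 * ε₁ * R < ∑ i, betaE a₀ S i := by
    rw [hRdef, ← mul_div_assoc]; exact hβ
  -- An index that is not good is charged either to its share of `∑ q_i` or, with factor `1/2`,
  -- to its entropy defect.
  have hbad : ∀ i, betaE a₀ S i ≤ (if GoodIdx a₀ S ε₁ i then betaE a₀ S i else 0) +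
      1 / 2 * ε₁ * qi S i + 1 / 2 * (binEnt (qi S i) - alphaE a₀ S i) := by
    intro i
    have h1 := hα i
    have h2 := hβq i
    have h3 : 0 ≤ 1 / 2 * ε₁ * qi S i := mul_nonneg (by positivity) (hq0 i)
    by_cases hg : GoodIdx a₀ S ε₁ i
    · rw [if_pos hg]; linarith
    · rw [if_neg hg]
      unfold GoodIdx at hg
      rw [not_and_or, not_le, not_le] at hg
      rcases hg with hg | hg
      · linarith
      · linarith
  have hsum := Finset.sum_le_sum fun i (_ : i ∈ (univ : Finset (Fin n))) => hbad i
  rw [Finset.sum_add_distrib, Finset.sum_add_distrib, ← Finset.mul_sum, ← Finset.mul_sum,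
    Finset.sum_sub_distrib, hqs, ← Finset.sum_filter] at hsum
  have hgoodβ : 1 / 5 * ε₁ * (rho n : ℝ) ≤
      ∑ i ∈ univ.filter (GoodIdx a₀ S ε₁), betaE a₀ S i := by
    have h1 : ε₁ * (0.4 * (rho n : ℝ)) ≤ ε₁ * R := mul_le_mul_of_nonneg_left hR he0.le
    linarith
  have hgoodq : 1 / 5 * ε₁ * (rho n : ℝ) ≤
      (∑ i ∈ univ.filter (GoodIdx a₀ S ε₁), qi S i) * L := by
    rw [Finset.sum_mul]
    exact hgoodβ.trans (Finset.sum_le_sum fun i _ => hβq i)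
  have hn0 : (0 : ℝ) < n := by exact_mod_cast (by omega : 0 < n)
  have hcs : (∑ i ∈ univ.filter (GoodIdx a₀ S ε₁), qi S i) ^ 2 ≤
      n * ∑ i ∈ univ.filter (GoodIdx a₀ S ε₁), qi S i ^ 2 := by
    refine sq_sum_le_card_mul_sum_sq.trans (mul_le_mul_of_nonneg_right ?_
      (Finset.sum_nonneg fun i _ => sq_nonneg _))
    exact_mod_cast (Finset.card_le_univ _).trans (Fintype.card_fin n).le
  rw [ge_iff_le, div_le_iff₀ (by positivity)]
  calc (1 / 5 * ε₁ * (rho n : ℝ)) ^ 2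
      ≤ ((∑ i ∈ univ.filter (GoodIdx a₀ S ε₁), qi S i) * L) ^ 2 :=
        pow_le_pow_left₀ (by positivity) hgoodq 2
    _ = (∑ i ∈ univ.filter (GoodIdx a₀ S ε₁), qi S i) ^ 2 * L ^ 2 := by ring
    _ ≤ (n * ∑ i ∈ univ.filter (GoodIdx a₀ S ε₁), qi S i ^ 2) * L ^ 2 :=
        mul_le_mul_of_nonneg_right hcs (sq_nonneg _)
    _ = _ := by ring
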